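/- arXiv:2507.11009 — 2 statements merged into one kernel-verified Lean document; each statement's English description precedes it below -/
import Mathlib

section
/- Let u be a positive divisor of q−1. For every w ∈ {0, ..., n'−2} and every y ∈ {1, ..., m}, rank_B({ζ^{u(t + s·d_{w,y})} : t ∈ T_{w,y}, s ∈ {0, ..., r̄−1}}) = l; i.e., these l field elements form a basis of F over B. -/
/-- `∏_{j=1}^{y-1} p_j` (the empty product is `1`). -/
def bigP (p : ℕ → ℕ) (y : ℕ) : ℕ := ∏ j ∈ Finset.Icc 1 (y - 1), p j

/-- `d_{w,y} = r^w · ∏_{j=1}^{y-1} p_j`. -/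
def dwy (p : ℕ → ℕ) (r w y : ℕ) : ℕ := r ^ w * bigP p y

/-- The digit of `t` at position `pos = w·m + y` (`1 ≤ y ≤ m`) in the multi-base
expansion `t = Σ_{w,y} t_{wm+y} · d_{w,y}`, namely `(t / d_{w,y}) % p_y`. -/
def digit (p : ℕ → ℕ) (m r t pos : ℕ) : ℕ :=
  t / dwy p r ((pos - 1) / m) ((pos - 1) % m + 1) % p ((pos - 1) % m + 1)

open IntermediateField in
/-- A nonzero element of a finite extension of `B` satisfies `x ^ (q ^ e - 1) = 1`, where `q` is
the cardinality of `B` and `e` the degree of `x` over `B`. -/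
theorem pow_card_pow_natDegree_minpoly_sub_one {B F : Type*} [Field B] [Field F] [Fintype B]
    [Fintype F] [Algebra B F] {x : F} (hx : x ≠ 0) :
    x ^ (Fintype.card B ^ (minpoly B x).natDegree - 1) = 1 := by
  classical
  have hint : IsIntegral B x := IsIntegral.of_finite B x
  have hcard : Fintype.card B⟮x⟯ = Fintype.card B ^ (minpoly B x).natDegree := by
    rw [← adjoin.finrank hint]
    exact Module.card_eq_pow_finrank
  have hgen : AdjoinSimple.gen B x ≠ 0 := by
    intro h
    apply hx
    rw [← AdjoinSimple.algebraMap_gen B x, h, map_zero]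
  have hpow := FiniteField.pow_card_sub_one_eq_one _ hgen
  rw [hcard] at hpow
  have := congrArg (algebraMap B⟮x⟯ F) hpow
  rwa [map_pow, AdjoinSimple.algebraMap_gen, map_one] at this

/-- If `ζ` is a primitive element of a degree `l` extension of `GF(q)` and `u ∣ q - 1`, then
`ζ ^ u` still has degree `l`. -/
theorem natDegree_minpoly_pow_of_dvd_card_sub_one {B F : Type*} [Field B] [Field F] [Fintype B]
    [Fintype F] [Algebra B F] {ζ : F}
    (hζ : orderOf ζ = Fintype.card B ^ Module.finrank B F - 1)
    {u : ℕ} (hdvd : u ∣ Fintype.card B - 1) :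
    (minpoly B (ζ ^ u)).natDegree = Module.finrank B F := by
  set q := Fintype.card B
  have hq1 : 1 < q := Fintype.one_lt_card
  have hl : Module.finrank B F ≠ 0 := Module.finrank_pos.ne'
  have hql : 1 < q ^ Module.finrank B F := Nat.one_lt_pow hl hq1
  have hζ0 : ζ ≠ 0 := by
    rintro rfl
    rw [orderOf_zero] at hζ
    omega
  refine le_antisymm (minpoly.natDegree_le _) (not_lt.1 fun hlt => ?_)
  set e := (minpoly B (ζ ^ u)).natDegree
  have he0 : e ≠ 0 := (minpoly.natDegree_pos (IsIntegral.of_finite B (ζ ^ u))).ne'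
  have hqe : 1 < q ^ e := Nat.one_lt_pow he0 hq1
  have hone : ζ ^ (u * (q ^ e - 1)) = 1 := by
    rw [pow_mul]
    exact pow_card_pow_natDegree_minpoly_sub_one (pow_ne_zero u hζ0)
  have hu : 0 < u := Nat.pos_of_dvd_of_pos hdvd (by omega)
  have hle : q ^ Module.finrank B F - 1 ≤ u * (q ^ e - 1) := by
    rw [← hζ]
    exact Nat.le_of_dvd (Nat.mul_pos hu (by omega)) (orderOf_dvd_of_pow_eq_one hone)
  have huq : u * (q ^ e - 1) ≤ (q - 1) * (q ^ e - 1) :=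
    Nat.mul_le_mul_right _ (Nat.le_of_dvd (by omega) hdvd)
  have hmono : q ^ (e + 1) ≤ q ^ Module.finrank B F := Nat.pow_le_pow_right (by omega) hlt
  rw [pow_succ] at hmono
  obtain ⟨a, ha⟩ : ∃ a, q = a + 2 := ⟨q - 2, by omega⟩
  obtain ⟨b, hb⟩ : ∃ b, q ^ e = b + 2 := ⟨q ^ e - 2, by omega⟩
  have key : q ^ e * q ≤ (q - 1) * (q ^ e - 1) + 1 := by omega
  rw [hb, ha] at key
  simp only [show a + 2 - 1 = a + 1 by omega,
    show b + 2 - 1 = b + 1 by omega] at key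
  nlinarith

/-- The place value of each of the `m` positions starting at `w * m + y` is a multiple `d_{w,y} Q`
of `d_{w,y}`, and `Q` times the base at that position divides `r`. -/
theorem exists_dwy_eq_mul {p : ℕ → ℕ} {m y k : ℕ} (w : ℕ) (hy : y ∈ Finset.Icc 1 m) (hk : k < m) :
    ∃ Q, dwy p (∏ i ∈ Finset.Icc 1 m, p i) ((w * m + y + k - 1) / m) ((w * m + y + k - 1) % m + 1)
        = dwy p (∏ i ∈ Finset.Icc 1 m, p i) w y * Q ∧
      Q * p ((w * m + y + k - 1) % m + 1) ∣ ∏ i ∈ Finset.Icc 1 m, p i := by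
  obtain ⟨hy1, hym⟩ := Finset.mem_Icc.1 hy
  have hIcc : ∀ a, Finset.Icc 1 a = Finset.Ico 1 (a + 1) := fun a => by
    ext
    simp
  obtain hj | hj := lt_or_ge (y + k - 1) m
  · have hdiv : (w * m + y + k - 1) / m = w := by
      rw [show w * m + y + k - 1 = (y + k - 1) + m * w by rw [mul_comm]; omega,
        Nat.add_mul_div_left _ _ (by omega), Nat.div_eq_of_lt hj, zero_add]
    have hmod : (w * m + y + k - 1) % m + 1 = y + k := by
      rw [show w * m + y + k - 1 = (y + k - 1) + m * w by rw [mul_comm]; omega,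
        Nat.add_mul_mod_self_left, Nat.mod_eq_of_lt hj]
      omega
    rw [hdiv, hmod]
    refine ⟨∏ i ∈ Finset.Ico y (y + k), p i, ?_, ?_⟩
    · rw [dwy, dwy, bigP, bigP, hIcc (y + k - 1), hIcc (y - 1), mul_assoc,
        Nat.sub_add_cancel hy1, Nat.sub_add_cancel (by omega),
        Finset.prod_Ico_consecutive _ hy1 (by omega)]
    · rw [← Finset.prod_Ico_succ_top (by omega)]
      refine Finset.prod_dvd_prod_of_subset _ _ _ fun i hi => ?_
      rw [Finset.mem_Ico] at hi
      rw [Finset.mem_Icc]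
      omega
  · obtain ⟨z, hz⟩ : ∃ z, y + k - 1 = m + z := ⟨y + k - 1 - m, by omega⟩
    have hdiv : (w * m + y + k - 1) / m = w + 1 := by
      rw [show w * m + y + k - 1 = z + m * (w + 1) by rw [mul_comm, mul_add]; omega,
        Nat.add_mul_div_left _ _ (by omega), Nat.div_eq_of_lt (by omega), zero_add]
    have hmod : (w * m + y + k - 1) % m + 1 = z + 1 := by
      rw [show w * m + y + k - 1 = z + m * (w + 1) by rw [mul_comm, mul_add]; omega,
        Nat.add_mul_mod_self_left, Nat.mod_eq_of_lt (by omega)]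
    have hsplit : ∏ i ∈ Finset.Icc 1 m, p i
        = (∏ i ∈ Finset.Ico 1 y, p i) * ∏ i ∈ Finset.Ico y (m + 1), p i := by
      rw [hIcc m, Finset.prod_Ico_consecutive _ hy1 (by omega)]
    rw [hdiv, hmod]
    refine ⟨(∏ i ∈ Finset.Ico y (m + 1), p i) * ∏ i ∈ Finset.Ico 1 (z + 1), p i, ?_, ?_⟩
    · rw [dwy, dwy, bigP, bigP, hIcc (z + 1 - 1), hIcc (y - 1),
        Nat.sub_add_cancel hy1, Nat.add_sub_cancel, pow_succ]
      nth_rewrite 2 [hsplit]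
      ring
    · rw [mul_assoc, ← Finset.prod_Ico_succ_top (by omega), hsplit,
        mul_comm (∏ i ∈ Finset.Ico 1 y, p i)]
      refine mul_dvd_mul_left _ (Finset.prod_dvd_prod_of_subset _ _ _ fun i hi => ?_)
      rw [Finset.mem_Ico] at hi ⊢
      omega

/-- Every `n` is `t + s * d_{w,y}` with `s < r` and a `t` whose digits at the `m` positions
starting at `w * m + y` vanish. -/
theorem exists_add_mul_dwy_eq {p : ℕ → ℕ} {m r y : ℕ} (hp : ∀ i ∈ Finset.Icc 1 m, 0 < p i)
    (hr : r = ∏ i ∈ Finset.Icc 1 m, p i) (w : ℕ) (hy : y ∈ Finset.Icc 1 m) (n : ℕ) :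
    ∃ t s, t + s * dwy p r w y = n ∧ s < r ∧
      ∀ k < m, digit p m r t (w * m + y + k) = 0 := by
  have hr0 : 0 < r := hr ▸ Finset.prod_pos hp
  have hd0 : 0 < dwy p r w y := by
    refine Nat.mul_pos (pow_pos hr0 w) (Finset.prod_pos fun i hi => hp i ?_)
    rw [Finset.mem_Icc] at hi hy ⊢
    omega
  set d := dwy p r w y with hd
  refine ⟨n % d + d * (r * (n / d / r)), n / d % r, ?_, Nat.mod_lt _ hr0, fun k hk => ?_⟩
  · have h₁ := Nat.div_add_mod n d
    have h₂ := Nat.div_add_mod (n / d) r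
    calc _ = d * (r * (n / d / r) + n / d % r) + n % d := by ring
      _ = n := by rw [h₂, h₁]
  · obtain ⟨Q, hQ, c, hc⟩ := exists_dwy_eq_mul (p := p) w hy hk
    rw [← hr] at hQ hc
    have hQ0 : 0 < Q := by
      apply Nat.pos_of_ne_zero
      rintro rfl
      simp [hr0.ne'] at hc
    rw [digit, hQ, ← hd, ← Nat.div_div_eq_div_mul, Nat.add_mul_div_left _ _ hd0,
      Nat.div_eq_of_lt (Nat.mod_lt _ hd0), zero_add]
    generalize n / d / r = b
    rw [hc, mul_assoc, mul_assoc, Nat.mul_div_cancel_left _ hQ0, Nat.mul_mod_right]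


/-- **Proposition 11.** Let `B = GF(q)`, let `p 1, …, p m` be primes
(`m ≥ 2`), `r = p 1 ⋯ p m`, `n' ≥ 2`, `l = r^{n'}`, `F = GF(q^l)`, `ζ` a primitive
element of `F`, and `u > 0` a divisor of `q - 1`.  For `w ∈ {0, …, n'-2}`,
`y ∈ {1, …, m}`, and `T_{w,y} = {t < l : digits of t at positions wm+y, …, wm+y+m-1
are all 0}`, the `l` elements `ζ^{u(t + s·d_{w,y})}`, `t ∈ T_{w,y}`,
`s ∈ {0, …, r-1}`, form a basis of `F` over `B`, i.e. their `B`-rank is `l`. -/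
theorem stmt_8 (q m : ℕ) (hm : 2 ≤ m) (p : ℕ → ℕ)
    (hp : ∀ i ∈ Finset.Icc 1 m, (p i).Prime)
    (r : ℕ) (hr : r = ∏ i ∈ Finset.Icc 1 m, p i)
    (n' : ℕ) (hn' : 2 ≤ n') (l : ℕ) (hl : l = r ^ n')
    (B F : Type*) [Field B] [Field F] [Fintype B] [Fintype F] [Algebra B F]
    (hq : Fintype.card B = q) (hrk : Module.finrank B F = l)
    (ζ : F) (hζ : orderOf ζ = q ^ l - 1)
    (u : ℕ) (hu : 0 < u) (hdvd : u ∣ q - 1)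
    (w y : ℕ) (hw : w ≤ n' - 2) (hy : y ∈ Finset.Icc 1 m) :
    Module.finrank B ↥(Submodule.span B
      {x : F | ∃ t, (t < l ∧ ∀ k < m, digit p m r t (w * m + y + k) = 0) ∧
        ∃ s < r, x = ζ ^ (u * (t + s * dwy p r w y))}) = l := by
  subst hq
  have hdeg : (minpoly B (ζ ^ u)).natDegree = l := by
    rw [natDegree_minpoly_pow_of_dvd_card_sub_one (by rw [hrk, hζ]) hdvd, hrk]
  have hspan : Submodule.span B (Set.range fun i : Fin (minpoly B (ζ ^ u)).natDegree =>
      (ζ ^ u) ^ (i : ℕ)) ≤ Submodule.span B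
      {x : F | ∃ t, (t < l ∧ ∀ k < m, digit p m r t (w * m + y + k) = 0) ∧
        ∃ s < r, x = ζ ^ (u * (t + s * dwy p r w y))} := by
    refine Submodule.span_mono ?_
    rintro _ ⟨i, rfl⟩
    obtain ⟨t, s, hts, hs, ht⟩ := exists_add_mul_dwy_eq (fun i hi => (hp i hi).pos) hr w hy i
    refine ⟨t, ⟨?_, ht⟩, s, hs, ?_⟩
    · have := i.isLt
      omega
    · rw [hts, pow_mul]
  refine le_antisymm (hrk ▸ Submodule.finrank_le _) ?_
  have hrank := Submodule.finrank_mono hspan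
  rwa [finrank_span_eq_card (linearIndependent_pow (ζ ^ u)), Fintype.card_fin, hdeg] at hrank
end

section
/- For every y ∈ {1, ..., m}, the map (t, s) ↦ t + s·d_{n'−1,y} is injective on T_{n'−1,y} × {0, ..., r̄−1}, and {t + s·d_{n'−1,y} : t ∈ T_{n'−1,y}, s ∈ {0, ..., r̄−1}} = {P·v : v ∈ {0, 1, ..., l−1}}, where P = ∏_{j=1}^{y−1} p_j (empty product = 1). -/
/-- `T_{n'-1,y}`: the `t ∈ {0,…,l-1}` whose digits at positions
`(n'-1)m+y, …, n'm` and at positions `1, …, y-1` all vanish. -/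
def Ttop (p : ℕ → ℕ) (m r n' l y : ℕ) : Set ℕ :=
  {t : ℕ | t < l ∧
    (∀ pos, (n' - 1) * m + y ≤ pos → pos ≤ n' * m → digit p m r t pos = 0) ∧
    (∀ pos, 1 ≤ pos → pos ≤ y - 1 → digit p m r t pos = 0)}

theorem bigP_succ (p : ℕ → ℕ) {j : ℕ} (hj : 1 ≤ j) : bigP p (j + 1) = bigP p j * p j := by
  obtain ⟨k, rfl⟩ := Nat.exists_eq_add_of_le' hj
  simp [bigP, Finset.prod_Icc_succ_top]

theorem bigP_dvd_bigP (p : ℕ → ℕ) {i j : ℕ} (hij : i ≤ j) : bigP p i ∣ bigP p j :=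
  Finset.prod_dvd_prod_of_subset _ _ _ (Finset.Icc_subset_Icc_right (by omega))

theorem bigP_pos {p : ℕ → ℕ} {m j : ℕ} (hp : ∀ i ∈ Finset.Icc 1 m, (p i).Prime)
    (hj : j ≤ m + 1) : 0 < bigP p j := by
  refine Finset.prod_pos fun i hi => (hp i ?_).pos
  simp only [Finset.mem_Icc] at hi ⊢
  omega

theorem digit_mul_add (p : ℕ → ℕ) {m : ℕ} (r t w : ℕ) {j : ℕ} (hj : 1 ≤ j) (hjm : j ≤ m) :
    digit p m r t (w * m + j) = t / dwy p r w j % p j := by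
  obtain ⟨k, rfl⟩ := Nat.exists_eq_add_of_le' hj
  have hdiv : (w * m + (k + 1) - 1) / m = w := by
    rw [show w * m + (k + 1) - 1 = k + m * w by rw [mul_comm]; omega,
      Nat.add_mul_div_left _ _ (by omega), Nat.div_eq_of_lt (by omega), zero_add]
  have hmod : (w * m + (k + 1) - 1) % m = k := by
    rw [show w * m + (k + 1) - 1 = k + m * w by rw [mul_comm]; omega,
      Nat.add_mul_mod_self_left, Nat.mod_eq_of_lt (by omega)]
  rw [digit, hdiv, hmod]

/-- The first `k` digits of `t` vanish iff `p 1 ⋯ p k` divides `t`. -/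
theorem forall_digit_eq_zero_iff_dvd (p : ℕ → ℕ) {m k : ℕ} (r t : ℕ) (hk : k ≤ m)
    (hp : ∀ i ∈ Finset.Icc 1 m, (p i).Prime) :
    (∀ pos, 1 ≤ pos → pos ≤ k → digit p m r t pos = 0) ↔ bigP p (k + 1) ∣ t := by
  have hdigit : ∀ j, 1 ≤ j → j ≤ m → digit p m r t j = t / bigP p j % p j := fun j h1 h2 => by
    simpa [dwy] using digit_mul_add p r t 0 h1 h2
  constructor
  · intro h
    induction k with
    | zero => simp [bigP]
    | succ k ih =>
      obtain ⟨c, rfl⟩ := ih (by omega) fun pos h1 h2 => h pos h1 (by omega)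
      have h0 := h (k + 1) (by omega) le_rfl
      rw [hdigit _ (by omega) hk, Nat.mul_div_cancel_left _ (bigP_pos hp (by omega))] at h0
      rw [bigP_succ p (by omega)]
      exact mul_dvd_mul_left _ (Nat.dvd_of_mod_eq_zero h0)
  · intro h pos h1 h2
    obtain ⟨c, rfl⟩ := (bigP_dvd_bigP p (by omega : pos + 1 ≤ k + 1)).trans h
    rw [hdigit _ h1 (by omega), bigP_succ p h1, mul_assoc,
      Nat.mul_div_cancel_left _ (bigP_pos hp (by omega)), Nat.mul_mod_right]

/-- For `t < r ^ w * (p 1 ⋯ p m)`, the digits of `t` at the positions `w * m + y, …, w * m + m`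
vanish iff `t < d_{w,y}`. -/
theorem forall_digit_eq_zero_iff_lt (p : ℕ → ℕ) {m r t w y : ℕ} (hr : 0 < r)
    (hp : ∀ i ∈ Finset.Icc 1 m, (p i).Prime) (hy : 1 ≤ y) (hym : y ≤ m)
    (ht : t < dwy p r w (m + 1)) :
    (∀ pos, w * m + y ≤ pos → pos ≤ w * m + m → digit p m r t pos = 0) ↔ t < dwy p r w y := by
  constructor
  · intro h
    refine Nat.decreasingInduction' (P := fun j => t < dwy p r w j) (m := y) (n := m + 1)
      (fun j hj hyj hlt => ?_) (by omega) ht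
    have h0 := h (w * m + j) (by omega) (by omega)
    rw [digit_mul_add p r t w (by omega) (by omega)] at h0
    have hd : 0 < dwy p r w j := Nat.mul_pos (pow_pos hr w) (bigP_pos hp (by omega))
    rw [dwy, bigP_succ p (by omega), ← mul_assoc] at hlt
    change t < dwy p r w j * p j at hlt
    rw [Nat.mod_eq_of_lt (Nat.div_lt_of_lt_mul hlt)] at h0
    exact (Nat.div_eq_zero_iff_lt hd).1 h0
  · intro h pos h1 h2
    obtain ⟨j, rfl⟩ := Nat.exists_eq_add_of_le (by omega : w * m ≤ pos)
    have hle : dwy p r w y ≤ dwy p r w j := Nat.mul_le_mul_left _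
      (Nat.le_of_dvd (bigP_pos hp (by omega)) (bigP_dvd_bigP p (by omega)))
    rw [digit_mul_add p r t w (by omega) (by omega), Nat.div_eq_of_lt (h.trans_le hle),
      Nat.zero_mod]

theorem mem_Ttop_iff (p : ℕ → ℕ) {m r w y t : ℕ} (hr : r = ∏ i ∈ Finset.Icc 1 m, p i)
    (hp : ∀ i ∈ Finset.Icc 1 m, (p i).Prime) (hy : 1 ≤ y) (hym : y ≤ m) :
    t ∈ Ttop p m r (w + 1) (r ^ (w + 1)) y ↔ t < dwy p r w y ∧ bigP p y ∣ t := by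
  have hr0 : 0 < r := hr ▸ Finset.prod_pos fun i hi => (hp i hi).pos
  have htop : dwy p r w (m + 1) = r ^ (w + 1) := by
    rw [dwy, bigP, Nat.add_sub_cancel, ← hr, pow_succ]
  have hle : dwy p r w y ≤ dwy p r w (m + 1) := Nat.mul_le_mul_left _
    (Nat.le_of_dvd (bigP_pos hp le_rfl) (bigP_dvd_bigP p (by omega)))
  have hlow := forall_digit_eq_zero_iff_dvd p r t (by omega : y - 1 ≤ m) hp
  rw [Nat.sub_add_cancel hy] at hlow
  rw [Ttop, Set.mem_ofPred_eq, hlow, Nat.add_sub_cancel, Nat.succ_mul, ← htop, ← and_assoc]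
  refine and_congr_left fun _ => ⟨fun h => ?_, fun h => ⟨h.trans_le hle, ?_⟩⟩
  · exact (forall_digit_eq_zero_iff_lt p hr0 hp hy hym h.1).1 h.2
  · exact (forall_digit_eq_zero_iff_lt p hr0 hp hy hym (h.trans_le hle)).2 h

/-- Let `p 1, …, p m` be primes (`m ≥ 2`), `r = p 1 ⋯ p m`,
`n' ≥ 2`, `l = r^{n'}`.  For every `y ∈ {1, …, m}`, the map
`(t, s) ↦ t + s·d_{n'-1,y}` is injective on `T_{n'-1,y} × {0, …, r-1}`, and its
range is `{P·v : 0 ≤ v ≤ l-1}` where `P = ∏_{j=1}^{y-1} p_j`. -/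
theorem stmt_12 (m : ℕ) (hm : 2 ≤ m) (p : ℕ → ℕ)
    (hp : ∀ i ∈ Finset.Icc 1 m, (p i).Prime)
    (r : ℕ) (hr : r = ∏ i ∈ Finset.Icc 1 m, p i)
    (n' : ℕ) (hn' : 2 ≤ n') (l : ℕ) (hl : l = r ^ n')
    (y : ℕ) (hy : y ∈ Finset.Icc 1 m) :
    Set.InjOn (fun ts : ℕ × ℕ => ts.1 + ts.2 * dwy p r (n' - 1) y)
      ((Ttop p m r n' l y ×ˢ {s : ℕ | s < r}) : Set (ℕ × ℕ)) ∧
    {a : ℕ | ∃ t ∈ Ttop p m r n' l y, ∃ s < r, a = t + s * dwy p r (n' - 1) y}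
      = {a : ℕ | ∃ v < l, a = bigP p y * v} := by
  obtain ⟨w, rfl⟩ := Nat.exists_eq_add_of_le' (by omega : 1 ≤ n')
  obtain ⟨hy1, hym⟩ := Finset.mem_Icc.1 hy
  subst hl
  have hr0 : 0 < r := hr ▸ Finset.prod_pos fun i hi => (hp i hi).pos
  have hP : 0 < bigP p y := bigP_pos hp (by omega)
  have hd : 0 < dwy p r w y := Nat.mul_pos (pow_pos hr0 w) hP
  have hmem := fun t => mem_Ttop_iff p (w := w) (t := t) hr hp hy1 hym
  have hPd : bigP p y ∣ dwy p r w y := Dvd.intro_left _ rfl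
  have hrd : r * dwy p r w y = bigP p y * r ^ (w + 1) := by rw [dwy]; ring
  rw [Nat.add_sub_cancel]
  constructor
  · rintro ⟨t, s⟩ ⟨ht, -⟩ ⟨t', s'⟩ ⟨ht', -⟩ h
    have htd := ((hmem t).1 ht).1
    have htd' := ((hmem t').1 ht').1
    have hmod := congrArg (· % dwy p r w y) h
    have hdiv := congrArg (· / dwy p r w y) h
    simp only [Nat.add_mul_mod_self_right, Nat.mod_eq_of_lt htd, Nat.mod_eq_of_lt htd'] at hmod
    simp only [Nat.add_mul_div_right _ _ hd, Nat.div_eq_of_lt htd, Nat.div_eq_of_lt htd',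
      zero_add] at hdiv
    rw [hmod, hdiv]
  · ext a
    constructor
    · rintro ⟨t, ht, s, hs, rfl⟩
      obtain ⟨htd, htP⟩ := (hmem t).1 ht
      obtain ⟨v, hv⟩ := dvd_add htP (hPd.mul_left s)
      refine ⟨v, Nat.lt_of_mul_lt_mul_left (a := bigP p y) ?_, hv⟩
      rw [← hv, ← hrd]
      calc t + s * dwy p r w y < dwy p r w y + s * dwy p r w y := by omega
        _ = (s + 1) * dwy p r w y := by ring
        _ ≤ r * dwy p r w y := Nat.mul_le_mul_right _ hs
    · rintro ⟨v, hv, rfl⟩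
      refine ⟨bigP p y * v % dwy p r w y,
        (hmem _).2 ⟨Nat.mod_lt _ hd, (Nat.dvd_mod_iff hPd).2 (Dvd.intro _ rfl)⟩,
        bigP p y * v / dwy p r w y, ?_, (Nat.mod_add_div' _ _).symm⟩
      rw [Nat.div_lt_iff_lt_mul hd, hrd]
      exact Nat.mul_lt_mul_of_pos_left hv hP
end
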